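/- Let g^ℂ be a finite-dimensional complex semisimple Lie algebra with Cartan subalgebra h, root system R and fixed Weyl basis {E_α}, and let k = h₀ + g(R₀) be a Lie subalgebra with h₀ ⊆ h, R₀ ⊆ R closed and [g_α,g_{−α}] ⊆ h₀ for α ∈ R₀^sym. Let γ ∈ R₀ be such that γ is not the sum of two elements of R₀. Then the restriction to k of the dual covector ω_γ satisfies d_k(ω_γ|_k) = −(γ ∧ ω_γ)|_k, i.e. ω_γ([X,Y]) = (γ∧ω_γ)(X,Y) for all X, Y ∈ k. If moreover γ([E_α, E_{−α}]) = 0 for every α ∈ R₀^sym, then γ|_k (extended by 0 on g(R₀)) satisfies d_k(γ|_k) = 0, and consequently λ·(γ ∧ ω_γ)|_k is a closed 2-form on k for every λ ∈ ℂ. -/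

import Mathlib

open scoped Classical

/-!
On the regular subalgebra `k = h₀ + g(R₀)` every bracket is determined by those of `h₀` and of the
root vectors, where `ω_γ ⁅x, E α⁆ = α x * ω_γ (E α)` for `x ∈ h₀`, and where `ω_γ ⁅E α, E β⁆ = 0`
because `γ` is not a sum of two roots of `R₀`. This gives `d_k ω_γ = -(γ ∧ ω_γ)`. Hence `γ ∧ ω_γ`
is exact on `k`, so it is closed by the Jacobi identity.
-/

section Bilinear

variable {K M N : Type*} [CommRing K] [AddCommGroup M] [Module K M] [AddCommGroup N] [Module K N]

theorem isAlt_apply_mem_of_mem_sup_span {B : M →ₗ[K] M →ₗ[K] N} (hB : B.IsAlt) (q : Submodule K N)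
    {p : Submodule K M} {s : Set M} (hpp : ∀ x ∈ p, ∀ y ∈ p, B x y ∈ q)
    (hps : ∀ x ∈ p, ∀ y ∈ s, B x y ∈ q) (hss : ∀ x ∈ s, ∀ y ∈ s, B x y ∈ q)
    {x y : M} (hx : x ∈ p ⊔ Submodule.span K s) (hy : y ∈ p ⊔ Submodule.span K s) :
    B x y ∈ q := by
  have swap {x y : M} (h : B x y ∈ q) : B y x ∈ q := hB.neg x y ▸ q.neg_mem h
  have extend_right {x : M} (hp : ∀ y ∈ p, B x y ∈ q) (hs : ∀ y ∈ s, B x y ∈ q) :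
      p ⊔ Submodule.span K s ≤ q.comap (B x) :=
    sup_le hp (Submodule.span_le.2 hs)
  have mem_of_mem_p {x : M} (hx : x ∈ p) := extend_right (hpp x hx) (hps x hx)
  have mem_of_mem_s {x : M} (hx : x ∈ s) :=
    extend_right (fun y hy ↦ swap (hps y hy x hx)) (hss x hx)
  exact extend_right (fun z hz ↦ swap (mem_of_mem_p hz hx))
    (fun z hz ↦ swap (mem_of_mem_s hz hx)) hy

/-- The wedge product `ξ ∧ η` of two covectors, as a bilinear form, normalised without the
factor `1 / 2`. -/
def covectorWedge (ξ η : Module.Dual K M) : M →ₗ[K] M →ₗ[K] K :=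
  ξ.smulRight η - (ξ.smulRight η).flip

theorem covectorWedge_apply (ξ η : Module.Dual K M) (x y : M) :
    covectorWedge ξ η x y = ξ x * η y - ξ y * η x :=
  rfl

theorem covectorWedge_isAlt (ξ η : Module.Dual K M) : (covectorWedge ξ η).IsAlt :=
  fun _ ↦ sub_self _

end Bilinear

section LieAlgebra

variable {K L : Type*} [CommRing K] [LieRing L] [LieAlgebra K L]

theorem toEnd_self_isAlt : (LieModule.toEnd K L L : L →ₗ[K] L →ₗ[K] L).IsAlt :=
  lie_self

/-- Closedness of the restriction of a 2-form `B` to the subalgebra `k`. The form is given on the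
ambient algebra, and only its values on `k` matter. -/
def IsClosedTwoFormOn (B : L →ₗ[K] L →ₗ[K] K) (k : LieSubalgebra K L) : Prop :=
  ∀ x ∈ k, ∀ y ∈ k, ∀ z ∈ k, B x ⁅y, z⁆ + B z ⁅x, y⁆ + B y ⁅z, x⁆ = 0

theorem isClosedTwoFormOn_of_apply_lie {B : L →ₗ[K] L →ₗ[K] K} {k : LieSubalgebra K L}
    {ξ : Module.Dual K L} (hB : ∀ x ∈ k, ∀ y ∈ k, ξ ⁅x, y⁆ = B x y) : IsClosedTwoFormOn B k := by
  intro x hx y hy z hz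
  rw [← hB x hx _ (k.lie_mem hy hz), ← hB z hz _ (k.lie_mem hx hy), ← hB y hy _ (k.lie_mem hz hx),
    add_right_comm, ← map_add, ← map_add, lie_jacobi, map_zero]

/-- An abelian subspace `H` together with root vectors `E α`, for `α` in a set `R` of roots, that
satisfy the bracket relations of a root space decomposition. Applied to `h₀` and a closed `R₀ ⊆ R`,
it describes the regular subalgebra `h₀ + g(R₀)`. The function `E` is total, but only its values on
`R` matter; the structure constants are not named. -/
structure IsRootVectorSystem (H : Submodule K L) (R : Set (Module.Dual K L))
    (E : Module.Dual K L → L) : Prop where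
  lie_eq_zero_of_mem : ∀ x ∈ H, ∀ y ∈ H, ⁅x, y⁆ = 0
  lie_rootVector : ∀ α ∈ R, ∀ x ∈ H, ⁅x, E α⁆ = α x • E α
  lie_rootVector_neg_mem : ∀ α ∈ R, -α ∈ R → ⁅E α, E (-α)⁆ ∈ H
  lie_rootVectors_mem_span : ∀ α ∈ R, ∀ β ∈ R, α + β ∈ R →
    ⁅E α, E β⁆ ∈ Submodule.span K {E (α + β)}
  lie_rootVectors_eq_zero : ∀ α ∈ R, ∀ β ∈ R, α + β ≠ 0 → α + β ∉ R → ⁅E α, E β⁆ = 0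

namespace IsRootVectorSystem

variable {H : Submodule K L} {R : Set (Module.Dual K L)} {E : Module.Dual K L → L}

theorem restrict (hE : IsRootVectorSystem H R E) {H₀ : Submodule K L}
    {R₀ : Set (Module.Dual K L)} (hH₀ : H₀ ≤ H) (hR₀ : R₀ ⊆ R)
    (hclosed : ∀ α ∈ R₀, ∀ β ∈ R₀, α + β ∈ R → α + β ∈ R₀)
    (hneg : ∀ α ∈ R₀, -α ∈ R₀ → ⁅E α, E (-α)⁆ ∈ H₀) : IsRootVectorSystem H₀ R₀ E where
  lie_eq_zero_of_mem x hx y hy := hE.lie_eq_zero_of_mem x (hH₀ hx) y (hH₀ hy)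
  lie_rootVector α hα x hx := hE.lie_rootVector α (hR₀ hα) x (hH₀ hx)
  lie_rootVector_neg_mem := hneg
  lie_rootVectors_mem_span α hα β hβ hαβ :=
    hE.lie_rootVectors_mem_span α (hR₀ hα) β (hR₀ hβ) (hR₀ hαβ)
  lie_rootVectors_eq_zero α hα β hβ h0 hαβ :=
    hE.lie_rootVectors_eq_zero α (hR₀ hα) β (hR₀ hβ) h0 (mt (hclosed α hα β hβ) hαβ)

theorem lie_rootVectors_mem (hE : IsRootVectorSystem H R E) {q : Submodule K L}
    {α β : Module.Dual K L} (hα : α ∈ R) (hβ : β ∈ R)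
    (hneg : -α ∈ R → ⁅E α, E (-α)⁆ ∈ q) (hadd : α + β ∈ R → E (α + β) ∈ q) :
    ⁅E α, E β⁆ ∈ q := by
  by_cases h0 : α + β = 0
  · obtain rfl := eq_neg_of_add_eq_zero_right h0
    exact hneg hβ
  by_cases hαβ : α + β ∈ R
  · exact (Submodule.span_singleton_le_iff_mem _ _).2 (hadd hαβ)
      (hE.lie_rootVectors_mem_span α hα β hβ hαβ)
  · rw [hE.lie_rootVectors_eq_zero α hα β hβ h0 hαβ]
    exact q.zero_mem

theorem lie_mem_of_mem_sup_span (hE : IsRootVectorSystem H R E) {q : Submodule K L}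
    (hroot : ∀ α ∈ R, E α ∈ q) (hneg : ∀ α ∈ R, -α ∈ R → ⁅E α, E (-α)⁆ ∈ q) {x y : L}
    (hx : x ∈ H ⊔ Submodule.span K (E '' R)) (hy : y ∈ H ⊔ Submodule.span K (E '' R)) :
    ⁅x, y⁆ ∈ q := by
  refine isAlt_apply_mem_of_mem_sup_span toEnd_self_isAlt q ?_ ?_ ?_ hx hy
  · intro x hx y hy
    simp [hE.lie_eq_zero_of_mem x hx y hy]
  · rintro x hx _ ⟨α, hα, rfl⟩
    simpa [hE.lie_rootVector α hα x hx] using q.smul_mem (α x) (hroot α hα)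
  · rintro _ ⟨α, hα, rfl⟩ _ ⟨β, hβ, rfl⟩
    exact hE.lie_rootVectors_mem hα hβ (hneg α hα) (hroot _)

/-- The regular subalgebra `H + g(R)` of a root vector system. -/
def regularSubalgebra (hE : IsRootVectorSystem H R E) : LieSubalgebra K L where
  toSubmodule := H ⊔ Submodule.span K (E '' R)
  lie_mem' := hE.lie_mem_of_mem_sup_span
    (fun _ hα ↦ Submodule.mem_sup_right (Submodule.subset_span (Set.mem_image_of_mem E hα)))
    (fun α hα hnegα ↦ Submodule.mem_sup_left (hE.lie_rootVector_neg_mem α hα hnegα))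

theorem apply_lie_eq_zero (hE : IsRootVectorSystem H R E) {ξ : Module.Dual K L}
    (hξE : ∀ α ∈ R, ξ (E α) = 0) (hξneg : ∀ α ∈ R, -α ∈ R → ξ ⁅E α, E (-α)⁆ = 0) :
    ∀ x ∈ hE.regularSubalgebra, ∀ y ∈ hE.regularSubalgebra, ξ ⁅x, y⁆ = 0 :=
  fun _ hx _ hy ↦ hE.lie_mem_of_mem_sup_span (q := LinearMap.ker ξ) hξE hξneg hx hy

theorem apply_lie_eq_covectorWedge (hE : IsRootVectorSystem H R E) {γ ω : Module.Dual K L}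
    (hγE : ∀ α ∈ R, γ (E α) = 0) (hωH : ∀ x ∈ H, ω x = 0)
    (hωE : ∀ α ∈ R, α ≠ γ → ω (E α) = 0) (hγsum : ∀ α ∈ R, ∀ β ∈ R, γ ≠ α + β) :
    ∀ x ∈ hE.regularSubalgebra, ∀ y ∈ hE.regularSubalgebra,
      ω ⁅x, y⁆ = covectorWedge γ ω x y := by
  let B := (LieModule.toEnd K L L : L →ₗ[K] L →ₗ[K] L).compr₂ ω - covectorWedge γ ω
  have hBalt : B.IsAlt := fun x ↦ by
    simp [B, (covectorWedge_isAlt γ ω).self_eq_zero]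
  have hB (x y : L) : B x y ∈ (⊥ : Submodule K K) ↔ ω ⁅x, y⁆ = covectorWedge γ ω x y :=
    sub_eq_zero
  intro x hx y hy
  refine (hB x y).1 (isAlt_apply_mem_of_mem_sup_span hBalt ⊥ ?_ ?_ ?_ hx hy)
  · intro x hx y hy
    simp [hB, covectorWedge_apply, hE.lie_eq_zero_of_mem x hx y hy, hωH x hx, hωH y hy]
  · rintro x hx _ ⟨α, hα, rfl⟩
    have weight_eq : α x * ω (E α) = γ x * ω (E α) := by
      rcases eq_or_ne α γ with rfl | hαγ
      · rfl
      · simp [hωE α hα hαγ]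
    simp [hB, covectorWedge_apply, hE.lie_rootVector α hα x hx, hωH x hx, weight_eq]
  · rintro _ ⟨α, hα, rfl⟩ _ ⟨β, hβ, rfl⟩
    have lie_mem_ker : ⁅E α, E β⁆ ∈ LinearMap.ker ω :=
      hE.lie_rootVectors_mem hα hβ (fun hnegα ↦ hωH _ (hE.lie_rootVector_neg_mem α hα hnegα))
        (fun hαβ ↦ hωE _ hαβ (hγsum α hα β hβ).symm)
    simp [hB, covectorWedge_apply, LinearMap.mem_ker.1 lie_mem_ker, hγE α hα, hγE β hβ]

end IsRootVectorSystem

theorem wedge_root_covector_closed_general {H : Submodule K L} {R : Set (Module.Dual K L)}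
    {E : Module.Dual K L → L} (hE : IsRootVectorSystem H R E) {γ ω : Module.Dual K L}
    (hγE : ∀ α ∈ R, γ (E α) = 0) (hωH : ∀ x ∈ H, ω x = 0)
    (hωE : ∀ α ∈ R, α ≠ γ → ω (E α) = 0) (hγsum : ∀ α ∈ R, ∀ β ∈ R, γ ≠ α + β) :
    (∀ x ∈ hE.regularSubalgebra, ∀ y ∈ hE.regularSubalgebra, ω ⁅x, y⁆ = covectorWedge γ ω x y)
    ∧ ((∀ α ∈ R, -α ∈ R → γ ⁅E α, E (-α)⁆ = 0) →
        ∀ x ∈ hE.regularSubalgebra, ∀ y ∈ hE.regularSubalgebra, γ ⁅x, y⁆ = 0)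
    ∧ ∀ c : K, IsClosedTwoFormOn (c • covectorWedge γ ω) hE.regularSubalgebra := by
  have hdω := hE.apply_lie_eq_covectorWedge hγE hωH hωE hγsum
  refine ⟨hdω, hE.apply_lie_eq_zero hγE, fun c ↦ ?_⟩
  exact isClosedTwoFormOn_of_apply_lie (ξ := c • ω) fun x hx y hy ↦
    congrArg (c • ·) (hdω x hx y hy)

end LieAlgebra

/-- Let `gC` be a finite-dimensional complex semisimple Lie algebra
with Cartan subalgebra `H`, root system `R` and a Weyl basis `{E α}` with dual
covectors `ωc α`, and let `k = h₀ + g(R₀)` be a Lie subalgebra with `h₀ ⊆ H`,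
`R₀ ⊆ R` closed and `⁅g_α, g_{-α}⁆ ⊆ h₀` for `α ∈ R₀^sym`.  Let `γ ∈ R₀` be a root
that is not the sum of two elements of `R₀`.  Then `d_k (ω_γ|_k) = -(γ ∧ ω_γ)|_k`,
i.e. `ω_γ ⁅X, Y⁆ = (γ ∧ ω_γ)(X, Y)` for all `X, Y ∈ k`.  If moreover
`γ ⁅E α, E (-α)⁆ = 0` for every `α ∈ R₀^sym`, then `d_k (γ|_k) = 0`, and
consequently `λ • (γ ∧ ω_γ)|_k` is a closed 2-form on `k` for every `λ ∈ ℂ`. -/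
theorem wedge_root_covector_closed
    {gC : Type*} [LieRing gC] [LieAlgebra ℂ gC] [FiniteDimensional ℂ gC]
    [LieAlgebra.IsSemisimple ℂ gC]
    (H : LieSubalgebra ℂ gC) [H.IsCartanSubalgebra]
    (R : Finset (Module.Dual ℂ gC))
    (E : Module.Dual ℂ gC → gC)
    (N : Module.Dual ℂ gC → Module.Dual ℂ gC → ℝ)
    (ωc : Module.Dual ℂ gC → Module.Dual ℂ gC)
    -- properties of the root space decomposition and the Weyl basis
    (habel : ∀ x ∈ H, ∀ y ∈ H, ⁅x, y⁆ = (0 : gC))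
    (hRne : ∀ α ∈ R, α ≠ (0 : Module.Dual ℂ gC))
    (hRneg : ∀ α ∈ R, -α ∈ R)
    (hEne : ∀ α ∈ R, E α ≠ 0)
    (hroot : ∀ α ∈ R, ∀ x ∈ H, ⁅x, E α⁆ = α x • E α)
    (hαE : ∀ α ∈ R, ∀ β ∈ R, α (E β) = 0)
    (hbracket : ∀ α ∈ R, ∀ β ∈ R, α + β ∈ R → ⁅E α, E β⁆ = (N α β : ℂ) • E (α + β))
    (hbracket0 : ∀ α ∈ R, ∀ β ∈ R, α + β ≠ 0 → α + β ∉ R → ⁅E α, E β⁆ = 0)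
    (hcoroot : ∀ α ∈ R, ⁅E α, E (-α)⁆ ∈ H)
    (hN0 : ∀ α β, α + β ∉ R → N α β = 0)
    (hindep : LinearIndependent ℂ (fun α : {x : Module.Dual ℂ gC // x ∈ R} => E ↑α))
    (hdisj : Disjoint H.toSubmodule (Submodule.span ℂ (E '' ↑R)))
    (hdecomp : H.toSubmodule ⊔ Submodule.span ℂ (E '' ↑R) = ⊤)
    (hωcH : ∀ α ∈ R, ∀ x ∈ H, ωc α x = 0)
    (hωcE : ∀ α ∈ R, ∀ β ∈ R, ωc α (E β) = if α = β then 1 else 0)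
    -- the closed subset `R₀ ⊆ R` and the subspace `h₀ ⊆ H`
    (R₀ : Finset (Module.Dual ℂ gC))
    (hR₀R : R₀ ⊆ R)
    (hR₀Closed : ∀ α ∈ R₀, ∀ β ∈ R₀, α + β ∈ R → α + β ∈ R₀)
    (h₀ : Submodule ℂ gC) (hh₀ : h₀ ≤ H.toSubmodule)
    (hsym : ∀ α ∈ R₀, -α ∈ R₀ → ⁅E α, E (-α)⁆ ∈ h₀)
    -- the regular subalgebra `k = h₀ + g(R₀)`
    (k : Submodule ℂ gC)
    (hk : k = h₀ ⊔ Submodule.span ℂ (E '' ↑R₀))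
    -- the distinguished root `γ`, not a sum of two elements of `R₀`
    (γ : Module.Dual ℂ gC)
    (hγ : γ ∈ R₀)
    (hγsum : ∀ α ∈ R₀, ∀ β ∈ R₀, γ ≠ α + β) :
    -- `d_k (ω_γ|_k) = -(γ ∧ ω_γ)|_k`
    (∀ X ∈ k, ∀ Y ∈ k, ωc γ ⁅X, Y⁆ = γ X * ωc γ Y - γ Y * ωc γ X)
    -- if `γ` kills the coroots of `R₀^sym` then `d_k (γ|_k) = 0` ...
    ∧ ((∀ α ∈ R₀, -α ∈ R₀ → γ ⁅E α, E (-α)⁆ = 0) →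
        (∀ X ∈ k, ∀ Y ∈ k, γ ⁅X, Y⁆ = 0)
        -- ... and consequently `λ • (γ ∧ ω_γ)|_k` is closed on `k` for every `λ`
        ∧ ∀ (lam : ℂ), ∀ X ∈ k, ∀ Y ∈ k, ∀ Z ∈ k,
            lam * (γ X * ωc γ ⁅Y, Z⁆ - γ ⁅Y, Z⁆ * ωc γ X)
            + lam * (γ Z * ωc γ ⁅X, Y⁆ - γ ⁅X, Y⁆ * ωc γ Z)
            + lam * (γ Y * ωc γ ⁅Z, X⁆ - γ ⁅Z, X⁆ * ωc γ Y) = 0) := by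
  subst hk
  have hE : IsRootVectorSystem H.toSubmodule (R : Set (Module.Dual ℂ gC)) E :=
    { lie_eq_zero_of_mem := habel
      lie_rootVector := hroot
      lie_rootVector_neg_mem := fun α hα _ ↦ hcoroot α hα
      lie_rootVectors_mem_span := fun α hα β hβ hαβ ↦
        Submodule.mem_span_singleton.2 ⟨N α β, (hbracket α hα β hβ hαβ).symm⟩
      lie_rootVectors_eq_zero := hbracket0 }
  have hE₀ : IsRootVectorSystem h₀ (R₀ : Set (Module.Dual ℂ gC)) E :=
    hE.restrict hh₀ hR₀R hR₀Closed hsym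
  have hγR : γ ∈ R := hR₀R hγ
  obtain ⟨hdω, hdγ, hclosed⟩ := wedge_root_covector_closed_general hE₀
    (fun α hα ↦ hαE γ hγR α (hR₀R hα)) (fun x hx ↦ hωcH γ hγR x (hh₀ hx))
    (fun α hα hαγ ↦ (hωcE γ hγR α (hR₀R hα)).trans (if_neg hαγ.symm)) hγsum
  exact ⟨hdω, fun hγneg ↦ ⟨hdγ hγneg, hclosed⟩⟩
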